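/- arXiv:math/9503212 — 2 statements merged into one kernel-verified Lean document; each statement's English description precedes it below -/
import Mathlib

section
/- Let X_1,…,X_k be jointly symmetric q-stable random variables (0<q≤2), m<k, and q_1,…,q_k ∈ (0,2]. Then E[exp(-Σ_{i=1}^k |X_i|^{q_i})] ≥ E[exp(-Σ_{i=1}^m |X_i|^{q_i})] · E[exp(-Σ_{i=m+1}^k |X_i|^{q_i})]. -/
open MeasureTheory
open scoped RealInnerProductSpace

/-!
Write `Z v` for the linear combinations of the `X i`. The law of `Z` is `q`-stable, so
`E cos (Z v) = exp (-‖T v‖ ^ q)` for a linear map `T` into `L^q`. As `q ≤ 2`, the function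
`N = ‖T ·‖ ^ q` satisfies `N (u + v) + N (u - v) ≤ 2 * (N u + N v)`, and convexity of `exp` gives
`E[cos (Z u) cos (Z v)] = (exp (-N (u + v)) + exp (-N (u - v))) / 2 ≥ exp (-N u) exp (-N v)`.
So cosines are positively correlated, and since covariance is bilinear and continuous this passes
to all functions generated by cosines under nonnegative combinations and bounded limits.

These functions form a multiplicative class, because `cos a cos b` is an average of cosines, which
is therefore also closed under power series with nonnegative coefficients. For `0 ≤ a ≤ 1` the
binomial series of `1 - (1 - x) ^ a` is of this kind, so the class contains
`exp (-(c * (1 - cos (Z v))) ^ a)`, and, rescaling `v`, the limit `exp (-|Z v| ^ (2 * a))`.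
-/

open Filter Topology

section RealAnalysis

theorem rpow_eq_sq_rpow_half {x : ℝ} (hx : 0 ≤ x) (q : ℝ) : x ^ q = (x ^ 2) ^ (q / 2) := by
  rw [← Real.rpow_natCast_mul hx, Nat.cast_ofNat, mul_div_cancel₀ q two_ne_zero]

theorem two_mul_one_sub_cos (x : ℝ) : 2 * (1 - Real.cos x) = (x * Real.sinc (x / 2)) ^ 2 := by
  rcases eq_or_ne x 0 with rfl | hx
  · simp
  · have hsin : x * Real.sinc (x / 2) = 2 * Real.sin (x / 2) := by
      rw [Real.sinc_of_ne_zero (by positivity)]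
      field_simp
    rw [hsin, mul_pow, Real.sin_sq_eq_half_sub, mul_div_cancel₀ x two_ne_zero]
    ring

theorem tendsto_mul_one_sub_cos_div (x : ℝ) :
    Tendsto (fun n : ℕ => 2 * ((n : ℝ) + 1) ^ 2 * (1 - Real.cos (x / (n + 1)))) atTop
      (𝓝 (x ^ 2)) := by
  have hsinc : Tendsto (fun n : ℕ => Real.sinc (x / (n + 1) / 2)) atTop (𝓝 1) := by
    have h := (tendsto_one_div_add_atTop_nhds_zero_nat (𝕜 := ℝ)).const_mul (x / 2)
    rw [mul_zero] at h
    convert (Real.continuous_sinc.tendsto 0).comp h using 2 with n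
    · simp only [Function.comp_apply]
      ring_nf
    · rw [Real.sinc_zero]
  have h := (hsinc.const_mul x).pow 2
  rw [mul_one] at h
  refine h.congr fun n => ?_
  have hn : (n : ℝ) + 1 ≠ 0 := n.cast_add_one_ne_zero
  rw [mul_right_comm, two_mul_one_sub_cos, ← mul_pow]
  field_simp

theorem succ_mul_choose_succ (a : ℝ) (n : ℕ) :
    ((n : ℝ) + 1) * Ring.choose a (n + 1) = (a - n) * Ring.choose a n := by
  have h := Ring.choose_smul_choose a n.le_succ
  simpa [mul_comm] using h

theorem neg_one_pow_mul_choose_succ_nonneg {a : ℝ} (h0 : 0 ≤ a) (h1 : a ≤ 1) (n : ℕ) :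
    0 ≤ (-1) ^ n * Ring.choose a (n + 1) := by
  induction n with
  | zero => simpa using h0
  | succ n ih =>
    have hrec := succ_mul_choose_succ a (n + 1)
    push_cast at hrec
    refine nonneg_of_mul_nonneg_right (a := (n : ℝ) + 1 + 1) ?_ (by positivity)
    calc 0 ≤ ((n : ℝ) + 1 - a) * ((-1) ^ n * Ring.choose a (n + 1)) :=
          mul_nonneg (by linarith [n.cast_nonneg (α := ℝ)]) ih
      _ = ((n : ℝ) + 1 + 1) * ((-1) ^ (n + 1) * Ring.choose a (n + 1 + 1)) := by
          rw [mul_left_comm (_ + 1), hrec]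
          ring

theorem hasSum_one_sub_rpow (a : ℝ) {x : ℝ} (hx : |x| < 1) :
    HasSum (fun n : ℕ => (-1) ^ n * Ring.choose a n * x ^ n) ((1 - x) ^ a) := by
  have h := (Real.one_add_rpow_hasFPowerSeriesOnBall_zero (a := a)).hasSum (y := -x)
    (by rw [← ENNReal.ofReal_one, Metric.eball_ofReal]; simpa using hx)
  rw [zero_add, ← sub_eq_add_neg] at h
  refine h.congr_fun fun n => ?_
  rw [binomialSeries_apply, List.ofFn_const, List.prod_replicate, smul_eq_mul, neg_pow]
  ring

theorem hasSum_one_sub_one_sub_rpow (a : ℝ) {x : ℝ} (hx : |x| < 1) :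
    HasSum (fun n : ℕ => (-1) ^ n * Ring.choose a (n + 1) * x ^ (n + 1)) (1 - (1 - x) ^ a) := by
  have h := ((hasSum_nat_add_iff' 1).2 (hasSum_one_sub_rpow a hx)).neg
  simpa [pow_succ] using h

end RealAnalysis

section Parallelogram

variable {F : Type*} [NormedAddCommGroup F]

theorem norm_add_rpow_add_norm_sub_rpow_le [InnerProductSpace ℝ F] {q : ℝ} (hq0 : 0 ≤ q)
    (hq2 : q ≤ 2) (x y : F) :
    ‖x + y‖ ^ q + ‖x - y‖ ^ q ≤ 2 * (‖x‖ ^ q + ‖y‖ ^ q) := by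
  have ha0 : 0 ≤ q / 2 := by positivity
  have ha1 : q / 2 ≤ 1 := by linarith
  have hconcave := (Real.concaveOn_rpow ha0 ha1).2 (Set.mem_Ici.2 (sq_nonneg ‖x + y‖))
    (Set.mem_Ici.2 (sq_nonneg ‖x - y‖)) one_half_pos.le one_half_pos.le (add_halves 1)
  have hsubadd := Real.rpow_add_le_add_rpow (sq_nonneg ‖x‖) (sq_nonneg ‖y‖) ha0 ha1
  have hpar : 1 / 2 * ‖x + y‖ ^ 2 + 1 / 2 * ‖x - y‖ ^ 2 = ‖x‖ ^ 2 + ‖y‖ ^ 2 := by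
    linarith [parallelogram_law_with_norm ℝ x y]
  simp only [smul_eq_mul, hpar] at hconcave
  simp only [rpow_eq_sq_rpow_half (norm_nonneg _) q]
  linarith

variable {α : Type*} {mα : MeasurableSpace α} {ν : Measure α}

theorem Lp_norm_rpow_eq_integral {p : ENNReal} (hp0 : p ≠ 0) (hp : p ≠ ⊤) (f : Lp F p ν) :
    ‖f‖ ^ p.toReal = ∫ x, ‖f x‖ ^ p.toReal ∂ν := by
  have hnonneg : 0 ≤ ∫ x, ‖f x‖ ^ p.toReal ∂ν := integral_nonneg fun x => by positivity
  rw [Lp.norm_def, (Lp.memLp f).eLpNorm_eq_integral_rpow_norm hp0 hp,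
    ENNReal.toReal_ofReal (Real.rpow_nonneg hnonneg _),
    Real.rpow_inv_rpow hnonneg (ENNReal.toReal_ne_zero.2 ⟨hp0, hp⟩)]

theorem Lp_norm_add_rpow_add_norm_sub_rpow_le [InnerProductSpace ℝ F] {q : ℝ} (hq0 : 0 < q)
    (hq2 : q ≤ 2) (f g : Lp F (ENNReal.ofReal q) ν) :
    ‖f + g‖ ^ q + ‖f - g‖ ^ q ≤ 2 * (‖f‖ ^ q + ‖g‖ ^ q) := by
  have hp0 : ENNReal.ofReal q ≠ 0 := by simpa using hq0
  have hpq : (ENNReal.ofReal q).toReal = q := ENNReal.toReal_ofReal hq0.le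
  have hpow (h : Lp F (ENNReal.ofReal q) ν) : Integrable (fun x => ‖h x‖ ^ q) ν := by
    simpa only [hpq] using (Lp.memLp h).integrable_norm_rpow hp0 ENNReal.ofReal_ne_top
  have hnorm (h : Lp F (ENNReal.ofReal q) ν) : ‖h‖ ^ q = ∫ x, ‖h x‖ ^ q ∂ν := by
    simpa only [hpq] using Lp_norm_rpow_eq_integral hp0 ENNReal.ofReal_ne_top h
  simp only [hnorm]
  rw [← integral_add (hpow _) (hpow _), ← integral_add (hpow _) (hpow _), ← integral_const_mul]
  refine integral_mono_ae ((hpow _).add (hpow _)) (((hpow _).add (hpow _)).const_mul 2) ?_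
  filter_upwards [Lp.coeFn_add f g, Lp.coeFn_sub f g] with x hadd hsub
  rw [hadd, hsub]
  exact norm_add_rpow_add_norm_sub_rpow_le hq0.le hq2 _ _

end Parallelogram

section LinearFamily

variable {Ω V : Type*} [AddCommGroup V] [Module ℝ V] {Z : V →ₗ[ℝ] Ω → ℝ}

/-- The positive definite functions of a linear family `Z` of random variables that are needed
here: the smallest class containing every `cos (Z v)` and closed under addition, multiplication by
nonnegative constants and uniformly bounded pointwise limits. It replaces the class of Fourier
transforms of symmetric measures on `V`, so that no Bochner theorem is required. -/
inductive CosineCone (Z : V →ₗ[ℝ] Ω → ℝ) : (Ω → ℝ) → Prop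
  | cos (v : V) : CosineCone Z fun ω => Real.cos (Z v ω)
  | add {f g : Ω → ℝ} (hf : CosineCone Z f) (hg : CosineCone Z g) :
      CosineCone Z fun ω => f ω + g ω
  | const_mul {f : Ω → ℝ} {c : ℝ} (hc : 0 ≤ c) (hf : CosineCone Z f) :
      CosineCone Z fun ω => c * f ω
  | of_tendsto {F : ℕ → Ω → ℝ} {f : Ω → ℝ} {C : ℝ} (hF : ∀ n, CosineCone Z (F n))
      (hC : ∀ n ω, |F n ω| ≤ C) (hlim : ∀ ω, Tendsto (fun n => F n ω) atTop (𝓝 (f ω))) :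
      CosineCone Z f

namespace CosineCone

variable {f g : Ω → ℝ}

theorem exists_bound (hf : CosineCone Z f) : ∃ C, ∀ ω, |f ω| ≤ C := by
  induction hf with
  | cos v => exact ⟨1, fun ω => Real.abs_cos_le_one _⟩
  | add _ _ hf hg =>
    obtain ⟨C, hC⟩ := hf
    obtain ⟨D, hD⟩ := hg
    exact ⟨C + D, fun ω => (abs_add_le _ _).trans (add_le_add (hC ω) (hD ω))⟩
  | @const_mul _ c hc _ hf =>
    obtain ⟨C, hC⟩ := hf
    refine ⟨c * C, fun ω => ?_⟩
    rw [abs_mul, abs_of_nonneg hc]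
    exact mul_le_mul_of_nonneg_left (hC ω) hc
  | of_tendsto _ hC hlim _ => exact ⟨_, fun ω => le_of_tendsto' (hlim ω).abs fun n => hC n ω⟩

theorem cos_mul (v : V) (hg : CosineCone Z g) :
    CosineCone Z fun ω => Real.cos (Z v ω) * g ω := by
  induction hg with
  | cos w =>
    convert const_mul one_half_pos.le (add (cos (Z := Z) (v + w)) (cos (v - w))) using 2 with ω
    rw [map_add, map_sub, Pi.add_apply, Pi.sub_apply, Real.cos_add, Real.cos_sub]
    ring
  | add _ _ hf hg => simpa only [mul_add] using add hf hg
  | const_mul hc _ hf => simpa only [mul_left_comm] using const_mul hc hf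
  | @of_tendsto _ _ C _ hC hlim hF =>
    refine of_tendsto (C := C) hF (fun n ω => ?_) fun ω => (hlim ω).const_mul _
    rw [abs_mul]
    exact (mul_le_of_le_one_left (abs_nonneg _) (Real.abs_cos_le_one _)).trans (hC n ω)

theorem mul (hf : CosineCone Z f) (hg : CosineCone Z g) : CosineCone Z fun ω => f ω * g ω := by
  induction hf with
  | cos v => exact cos_mul v hg
  | add _ _ hf₁ hf₂ => simpa only [add_mul] using add hf₁ hf₂
  | const_mul hc _ hf => simpa only [mul_assoc] using const_mul hc hf
  | @of_tendsto _ _ C _ hC hlim hF =>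
    obtain ⟨D, hD⟩ := hg.exists_bound
    refine of_tendsto (C := C * D) hF (fun n ω => ?_) fun ω => (hlim ω).mul_const _
    rw [abs_mul]
    exact mul_le_mul (hC n ω) (hD ω) (abs_nonneg _) ((abs_nonneg _).trans (hC n ω))

theorem const {c : ℝ} (hc : 0 ≤ c) : CosineCone Z fun _ => c := by
  simpa using const_mul hc (cos (Z := Z) 0)

theorem pow (hf : CosineCone Z f) (n : ℕ) : CosineCone Z fun ω => f ω ^ n := by
  induction n with
  | zero => simpa using const (Z := Z) zero_le_one
  | succ n ih => simpa only [pow_succ] using ih.mul hf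

theorem sum {ι : Type*} (s : Finset ι) {F : ι → Ω → ℝ} (hF : ∀ i ∈ s, CosineCone Z (F i)) :
    CosineCone Z fun ω => ∑ i ∈ s, F i ω := by
  induction s using Finset.cons_induction with
  | empty => simpa using const (Z := Z) le_rfl
  | cons i s hi ih =>
    rw [Finset.forall_mem_cons] at hF
    simpa only [Finset.sum_cons] using add hF.1 (ih hF.2)

theorem prod {ι : Type*} (s : Finset ι) {F : ι → Ω → ℝ} (hF : ∀ i ∈ s, CosineCone Z (F i)) :
    CosineCone Z fun ω => ∏ i ∈ s, F i ω := by
  induction s using Finset.cons_induction with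
  | empty => simpa using const (Z := Z) zero_le_one
  | cons i s hi ih =>
    rw [Finset.forall_mem_cons] at hF
    simpa only [Finset.prod_cons] using mul hF.1 (ih hF.2)

theorem hasSum {F : ℕ → Ω → ℝ} {b : ℕ → ℝ} (hF : ∀ n, CosineCone Z (F n)) (hb : Summable b)
    (hFb : ∀ n ω, |F n ω| ≤ b n) (hf : ∀ ω, HasSum (fun n => F n ω) (f ω)) : CosineCone Z f := by
  refine of_tendsto (C := ∑' n, b n) (fun N => sum (Finset.range N) fun n _ => hF n)
    (fun N ω => ?_) fun ω => (hf ω).tendsto_sum_nat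
  calc |∑ n ∈ Finset.range N, F n ω|
      ≤ ∑ n ∈ Finset.range N, |F n ω| := Finset.abs_sum_le_sum_abs _ _
    _ ≤ ∑ n ∈ Finset.range N, b n := Finset.sum_le_sum fun n _ => hFb n ω
    _ ≤ ∑' n, b n := hb.sum_le_tsum _ fun n _ => (abs_nonneg _).trans (hFb n ω)

theorem exp (hf : CosineCone Z f) : CosineCone Z fun ω => Real.exp (f ω) := by
  obtain ⟨R, hR⟩ := hf.exists_bound
  refine hasSum (F := fun n ω => (n.factorial : ℝ)⁻¹ * f ω ^ n)
    (b := fun n => (n.factorial : ℝ)⁻¹ * R ^ n)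
    (fun n => const_mul (by positivity) (hf.pow n)) ?_ (fun n ω => ?_) fun ω => ?_
  · simpa only [← div_eq_inv_mul] using Real.summable_pow_div_factorial R
  · rw [abs_mul, abs_pow, abs_of_nonneg (by positivity)]
    gcongr
    exact hR ω
  · rw [Real.exp_eq_exp_ℝ]
    simpa only [← div_eq_inv_mul] using NormedSpace.expSeries_div_hasSum_exp (f ω)

theorem one_sub_one_sub_mul_rpow {a r : ℝ} (ha0 : 0 ≤ a) (ha1 : a ≤ 1) (hr0 : 0 ≤ r)
    (hr1 : r < 1) (hf : CosineCone Z f) (hf1 : ∀ ω, |f ω| ≤ 1) :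
    CosineCone Z fun ω => 1 - (1 - r * f ω) ^ a := by
  have hrf (ω : Ω) : |r * f ω| ≤ r := by
    rw [abs_mul, abs_of_nonneg hr0]
    exact mul_le_of_le_one_right hr0 (hf1 ω)
  refine hasSum
    (fun n => const_mul (neg_one_pow_mul_choose_succ_nonneg ha0 ha1 n)
      ((const_mul hr0 hf).pow (n + 1)))
    (hasSum_one_sub_one_sub_rpow a (by rwa [abs_of_nonneg hr0])).summable (fun n ω => ?_)
    fun ω => hasSum_one_sub_one_sub_rpow a ((hrf ω).trans_lt hr1)
  have hcoeff := neg_one_pow_mul_choose_succ_nonneg ha0 ha1 n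
  rw [abs_mul, abs_pow, abs_of_nonneg hcoeff]
  gcongr
  exact hrf ω

theorem one_sub_one_sub_rpow {a : ℝ} (ha0 : 0 ≤ a) (ha1 : a ≤ 1) (hf : CosineCone Z f)
    (hf1 : ∀ ω, |f ω| ≤ 1) : CosineCone Z fun ω => 1 - (1 - f ω) ^ a := by
  let r : ℕ → ℝ := fun n => n / (n + 1)
  have hr0 (n : ℕ) : 0 ≤ r n := by positivity
  have hr1 (n : ℕ) : r n < 1 := (div_lt_one (by positivity)).2 (lt_add_one _)
  refine of_tendsto (C := 1) (fun n => one_sub_one_sub_mul_rpow ha0 ha1 (hr0 n) (hr1 n) hf hf1)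
    (fun n ω => ?_) fun ω => ?_
  · have hrf : |r n * f ω| ≤ 1 := by
      rw [abs_mul, abs_of_nonneg (hr0 n)]
      exact mul_le_one₀ (hr1 n).le (abs_nonneg _) (hf1 ω)
    obtain ⟨hneg, hpos⟩ := abs_le.1 hrf
    have hbase : 0 ≤ 1 - r n * f ω := by linarith
    have hle : (1 - r n * f ω) ^ a ≤ 2 :=
      calc (1 - r n * f ω) ^ a ≤ 2 ^ a := Real.rpow_le_rpow hbase (by linarith) ha0
        _ ≤ 2 ^ (1 : ℝ) := Real.rpow_le_rpow_of_exponent_le one_le_two ha1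
        _ = 2 := Real.rpow_one 2
    exact abs_le.2 ⟨by linarith, by linarith [Real.rpow_nonneg hbase a]⟩
  · have hr : Tendsto r atTop (𝓝 1) := tendsto_natCast_div_add_atTop 1
    have h := ((hr.mul_const (f ω)).const_sub 1).rpow_const (p := a) (Or.inr ha0)
    simpa only [one_mul] using h.const_sub 1

theorem exp_neg_mul_one_sub_rpow {a c : ℝ} (ha0 : 0 ≤ a) (ha1 : a ≤ 1) (hc : 0 ≤ c)
    (hf : CosineCone Z f) (hf1 : ∀ ω, |f ω| ≤ 1) :
    CosineCone Z fun ω => Real.exp (-(c * (1 - f ω)) ^ a) := by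
  have hca : 0 ≤ c ^ a := Real.rpow_nonneg hc a
  convert const_mul (Real.exp_nonneg (-c ^ a))
    (const_mul hca (one_sub_one_sub_rpow ha0 ha1 hf hf1)).exp using 2 with ω
  rw [← Real.exp_add, Real.mul_rpow hc (sub_nonneg.2 (abs_le.1 (hf1 ω)).2)]
  ring_nf

theorem exp_neg_abs_rpow {q : ℝ} (hq0 : 0 ≤ q) (hq2 : q ≤ 2) (v : V) :
    CosineCone Z fun ω => Real.exp (-|Z v ω| ^ q) := by
  let F : ℕ → Ω → ℝ := fun n ω =>
    Real.exp (-(2 * ((n : ℝ) + 1) ^ 2 * (1 - Real.cos (Z v ω / (n + 1)))) ^ (q / 2))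
  have hF (n : ℕ) : CosineCone Z (F n) := by
    have h := exp_neg_mul_one_sub_rpow (by positivity : 0 ≤ q / 2) (by linarith)
      (by positivity : 0 ≤ 2 * ((n : ℝ) + 1) ^ 2) (cos (Z := Z) ((n + 1 : ℝ)⁻¹ • v))
      fun ω => Real.abs_cos_le_one _
    simpa only [map_smul, Pi.smul_apply, smul_eq_mul, ← div_eq_inv_mul] using h
  refine of_tendsto (C := 1) hF (fun n ω => ?_) fun ω => ?_
  · rw [Real.abs_exp, Real.exp_le_one_iff, neg_nonpos]
    exact Real.rpow_nonneg (mul_nonneg (by positivity) (sub_nonneg.2 (Real.cos_le_one _))) _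
  · rw [rpow_eq_sq_rpow_half (abs_nonneg _), sq_abs]
    exact (Real.continuous_exp.tendsto _).comp
      ((tendsto_mul_one_sub_cos_div _).rpow_const (Or.inr (by positivity))).neg

theorem exp_neg_sum_abs_rpow {ι : Type*} (s : Finset ι) {p : ι → ℝ}
    (hp : ∀ i ∈ s, 0 ≤ p i ∧ p i ≤ 2) (v : ι → V) :
    CosineCone Z fun ω => Real.exp (-∑ i ∈ s, |Z (v i) ω| ^ p i) := by
  simp only [← Finset.sum_neg_distrib, Real.exp_sum]
  exact prod s fun i hi => exp_neg_abs_rpow (hp i hi).1 (hp i hi).2 (v i)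

end CosineCone

section Correlation

variable {mΩ : MeasurableSpace Ω} {μ : Measure Ω}

theorem CosineCone.aestronglyMeasurable {f : Ω → ℝ} (hf : CosineCone Z f)
    (hZ : ∀ v, AEMeasurable (Z v) μ) : AEStronglyMeasurable f μ := by
  induction hf with
  | cos v => exact (Real.measurable_cos.comp_aemeasurable (hZ v)).aestronglyMeasurable
  | add _ _ hf hg => exact hf.add hg
  | const_mul _ _ hf => exact hf.const_mul _
  | of_tendsto _ _ hlim hF => exact aestronglyMeasurable_of_tendsto_ae atTop hF (.of_forall hlim)

theorem CosineCone.integrable [IsFiniteMeasure μ] {f : Ω → ℝ} (hf : CosineCone Z f)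
    (hZ : ∀ v, AEMeasurable (Z v) μ) : Integrable f μ := by
  obtain ⟨C, hC⟩ := hf.exists_bound
  exact .of_bound (hf.aestronglyMeasurable hZ) C (.of_forall hC)

theorem CosineCone.integrable_mul {f h : Ω → ℝ} (hf : CosineCone Z f)
    (hZ : ∀ v, AEMeasurable (Z v) μ) (hh : Integrable h μ) :
    Integrable (fun ω => f ω * h ω) μ := by
  obtain ⟨C, hC⟩ := hf.exists_bound
  exact hh.bdd_mul (hf.aestronglyMeasurable hZ) (.of_forall hC)

theorem CosineCone.integral_mul_nonneg {f h : Ω → ℝ} (hf : CosineCone Z f)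
    (hZ : ∀ v, AEMeasurable (Z v) μ) (hh : Integrable h μ)
    (hcos : ∀ v, 0 ≤ ∫ ω, Real.cos (Z v ω) * h ω ∂μ) : 0 ≤ ∫ ω, f ω * h ω ∂μ := by
  induction hf with
  | cos v => exact hcos v
  | add hf hg ihf ihg =>
    simp only [add_mul]
    rw [integral_add (hf.integrable_mul hZ hh) (hg.integrable_mul hZ hh)]
    exact add_nonneg ihf ihg
  | const_mul hc _ ih =>
    simp only [mul_assoc]
    rw [integral_const_mul]
    exact mul_nonneg hc ih
  | @of_tendsto F f C hF hC hlim ih =>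
    have hbound (n : ℕ) (ω : Ω) : ‖F n ω * h ω‖ ≤ C * ‖h ω‖ := by
      rw [norm_mul]
      exact mul_le_mul_of_nonneg_right (hC n ω) (norm_nonneg _)
    exact ge_of_tendsto' (tendsto_integral_of_dominated_convergence (fun ω => C * ‖h ω‖)
      (fun n => ((hF n).integrable_mul hZ hh).1) (hh.norm.const_mul C)
      (fun n => .of_forall (hbound n)) (.of_forall fun ω => (hlim ω).mul_const _)) ih

variable [IsFiniteMeasure μ]

theorem CosineCone.integral_mul_integral_le_of_cos_right {f h : Ω → ℝ} (hf : CosineCone Z f)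
    (hZ : ∀ v, AEMeasurable (Z v) μ) (hh : Integrable h μ)
    (hcos : ∀ v, (∫ ω, Real.cos (Z v ω) ∂μ) * (∫ ω, h ω ∂μ) ≤
      ∫ ω, Real.cos (Z v ω) * h ω ∂μ) :
    (∫ ω, f ω ∂μ) * (∫ ω, h ω ∂μ) ≤ ∫ ω, f ω * h ω ∂μ := by
  have hcov {k : Ω → ℝ} (hk : CosineCone Z k) :
      ∫ ω, k ω * (h ω - ∫ ω', h ω' ∂μ) ∂μ =
        (∫ ω, k ω * h ω ∂μ) - (∫ ω, k ω ∂μ) * (∫ ω, h ω ∂μ) := by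
    simp only [mul_sub]
    rw [integral_sub (hk.integrable_mul hZ hh) ((hk.integrable hZ).mul_const _),
      integral_mul_const]
  rw [← sub_nonneg, ← hcov hf]
  refine hf.integral_mul_nonneg hZ (hh.sub (integrable_const _)) fun v => ?_
  rw [hcov (.cos v), sub_nonneg]
  exact hcos v

theorem CosineCone.integral_mul_integral_le {f g : Ω → ℝ} (hf : CosineCone Z f)
    (hg : CosineCone Z g) (hZ : ∀ v, AEMeasurable (Z v) μ)
    (hcos : ∀ u v, (∫ ω, Real.cos (Z u ω) ∂μ) * (∫ ω, Real.cos (Z v ω) ∂μ) ≤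
      ∫ ω, Real.cos (Z u ω) * Real.cos (Z v ω) ∂μ) :
    (∫ ω, f ω ∂μ) * (∫ ω, g ω ∂μ) ≤ ∫ ω, f ω * g ω ∂μ := by
  refine hf.integral_mul_integral_le_of_cos_right hZ (hg.integrable hZ) fun u => ?_
  have h := hg.integral_mul_integral_le_of_cos_right hZ
    ((CosineCone.cos u).integrable hZ) fun v => hcos v u
  simpa only [mul_comm] using h

theorem integral_cos_eq_re_integral_cexp {X : Ω → ℝ} (hX : AEMeasurable X μ) :
    ∫ ω, Real.cos (X ω) ∂μ = (∫ ω, Complex.exp (X ω * Complex.I) ∂μ).re := by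
  have hexp : Integrable (fun ω => Complex.exp (X ω * Complex.I)) μ :=
    .of_bound (hX.complex_ofReal.mul_const _).cexp.aestronglyMeasurable 1
      (.of_forall fun ω => (Complex.norm_exp_ofReal_mul_I _).le)
  simpa only [RCLike.re_to_complex, Complex.exp_ofReal_mul_I_re] using integral_re hexp

theorem integral_cos_mul_integral_cos_le {N : V → ℝ} (hZ : ∀ v, AEMeasurable (Z v) μ)
    (hN : ∀ u v, N (u + v) + N (u - v) ≤ 2 * (N u + N v))
    (hcos : ∀ v, ∫ ω, Real.cos (Z v ω) ∂μ = Real.exp (-N v)) (u v : V) :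
    (∫ ω, Real.cos (Z u ω) ∂μ) * (∫ ω, Real.cos (Z v ω) ∂μ) ≤
      ∫ ω, Real.cos (Z u ω) * Real.cos (Z v ω) ∂μ := by
  have hprod (ω : Ω) : Real.cos (Z u ω) * Real.cos (Z v ω) =
      1 / 2 * (Real.cos (Z (u + v) ω) + Real.cos (Z (u - v) ω)) := by
    rw [map_add, map_sub, Pi.add_apply, Pi.sub_apply, Real.cos_add, Real.cos_sub]
    ring
  have hconvex := convexOn_exp.2 (Set.mem_univ (-N (u + v))) (Set.mem_univ (-N (u - v)))
    one_half_pos.le one_half_pos.le (add_halves 1)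
  calc (∫ ω, Real.cos (Z u ω) ∂μ) * (∫ ω, Real.cos (Z v ω) ∂μ)
      = Real.exp (-(N u + N v)) := by rw [hcos, hcos, ← Real.exp_add, neg_add]
    _ ≤ Real.exp (1 / 2 * -N (u + v) + 1 / 2 * -N (u - v)) :=
        Real.exp_le_exp.2 (by linarith [hN u v])
    _ ≤ 1 / 2 * (Real.exp (-N (u + v)) + Real.exp (-N (u - v))) := by
        simpa only [smul_eq_mul, mul_add] using hconvex
    _ = ∫ ω, Real.cos (Z u ω) * Real.cos (Z v ω) ∂μ := by
        simp only [hprod]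
        rw [integral_const_mul, integral_add ((CosineCone.cos _).integrable hZ)
          ((CosineCone.cos _).integrable hZ), hcos, hcos]

end Correlation

end LinearFamily

theorem stable_correlation_exp_general {Ω V F α ι : Type*} [AddCommGroup V] [Module ℝ V]
    [NormedAddCommGroup F] [InnerProductSpace ℝ F] {mα : MeasurableSpace α} {ν : Measure α}
    {q : ℝ} (hq0 : 0 < q) (hq2 : q ≤ 2)
    {mΩ : MeasurableSpace Ω} {μ : Measure Ω} [IsProbabilityMeasure μ]
    (Z : V →ₗ[ℝ] Ω → ℝ) (hZ : ∀ v, AEMeasurable (Z v) μ)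
    (T : V →ₗ[ℝ] Lp F (ENNReal.ofReal q) ν)
    (hchar : ∀ v, ∫ ω, Complex.exp (Z v ω * Complex.I) ∂μ = Complex.exp (-(‖T v‖ ^ q : ℝ)))
    (v : ι → V) {p : ι → ℝ} (hp : ∀ i, 0 ≤ p i ∧ p i ≤ 2) (s t : Finset ι) :
    (∫ ω, Real.exp (-∑ i ∈ s, |Z (v i) ω| ^ p i) ∂μ) *
        (∫ ω, Real.exp (-∑ i ∈ t, |Z (v i) ω| ^ p i) ∂μ) ≤
      ∫ ω, Real.exp (-(∑ i ∈ s, |Z (v i) ω| ^ p i + ∑ i ∈ t, |Z (v i) ω| ^ p i)) ∂μ := by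
  have hcos (w : V) : ∫ ω, Real.cos (Z w ω) ∂μ = Real.exp (-‖T w‖ ^ q) := by
    rw [integral_cos_eq_re_integral_cexp (hZ w), hchar, ← Complex.ofReal_neg, Complex.exp_ofReal_re]
  have hpar (u w : V) : ‖T (u + w)‖ ^ q + ‖T (u - w)‖ ^ q ≤ 2 * (‖T u‖ ^ q + ‖T w‖ ^ q) := by
    rw [map_add, map_sub]
    exact Lp_norm_add_rpow_add_norm_sub_rpow_le hq0 hq2 _ _
  have hcone (A : Finset ι) : CosineCone Z fun ω => Real.exp (-∑ i ∈ A, |Z (v i) ω| ^ p i) :=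
    .exp_neg_sum_abs_rpow A (fun i _ => hp i) v
  simp only [neg_add, Real.exp_add]
  exact (hcone s).integral_mul_integral_le (hcone t) hZ
    (integral_cos_mul_integral_cos_le hZ hpar hcos)

/-- Example (ii): correlation inequality for the functions `exp(-∑|X_i|^{q_i})` of
jointly symmetric `q`-stable random variables. -/
theorem stable_correlation_exp
    (q : ℝ) (hq0 : 0 < q) (hq2 : q ≤ 2)
    (n k m : ℕ) (hm : m < k)
    (Ω : Type*) [MeasureSpace Ω] [IsProbabilityMeasure (volume : Measure Ω)]
    (Y : Ω → EuclideanSpace ℝ (Fin n)) (hY : Measurable Y)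
    (s : Fin n → Lp ℝ (ENNReal.ofReal q) (volume.restrict (Set.Icc (0:ℝ) 1)))
    (hchar : ∀ θ : EuclideanSpace ℝ (Fin n),
      ∫ ω, Complex.exp ((⟪θ, Y ω⟫ : ℝ) * Complex.I) =
        Complex.exp (-(‖∑ i, θ i • s i‖ ^ q : ℝ)))
    (ξ : Fin k → EuclideanSpace ℝ (Fin n))
    (X : Fin k → Ω → ℝ) (hX : ∀ i ω, X i ω = ⟪Y ω, ξ i⟫)
    (q' : Fin k → ℝ) (hq' : ∀ i, 0 < q' i ∧ q' i ≤ 2) :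
    ∫ ω, Real.exp (-∑ i : Fin k, |X i ω| ^ q' i) ≥
      (∫ ω, Real.exp (-∑ i ∈ Finset.univ.filter (fun i : Fin k => (i : ℕ) < m),
          |X i ω| ^ q' i)) *
      (∫ ω, Real.exp (-∑ i ∈ Finset.univ.filter (fun i : Fin k => m ≤ (i : ℕ)),
          |X i ω| ^ q' i)) := by
  have h := stable_correlation_exp_general hq0 hq2
    (LinearMap.pi fun ω => (innerₗ (EuclideanSpace ℝ (Fin n))).flip (Y ω))
    (fun θ => (hY.const_inner (c := θ)).aemeasurable)
    (Fintype.linearCombination ℝ s ∘ₗ (WithLp.linearEquiv 2 ℝ (Fin n → ℝ)).toLinearMap)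
    hchar ξ (fun i => ⟨(hq' i).1.le, (hq' i).2⟩) {i | (i : ℕ) < m} {i | ¬ (i : ℕ) < m}
  simp only [Finset.sum_filter_add_sum_filter_not] at h
  simpa [hX, real_inner_comm] using h
end

section
/- Let F ⊂ ℝ^k be a symmetric convex set with compact closure and nonempty interior, and define L_{i,m} = ∫_F (x_i x_m - δ_{i,m}) exp(-‖x‖²/2) dx. Then the matrix L is negative definite: for every nonzero α ∈ ℝ^k, Σ_{i,m} L_{i,m} α_i α_m < 0. -/
open MeasureTheory

/-!
Up to a positive factor, the quadratic form of `L` at `α` is `∫_F (⟪α, x⟫² - ‖α‖²) dγ` for the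
standard Gaussian measure `γ`; by homogeneity let `‖α‖ = 1`. Cut `F` by the hyperplanes
`⟪α, x⟫ = t` and let `g t` be the Gaussian measure of the slice, so that by Fubini the integral is
`∫ (t² - 1) g(t) dγ₁(t)` for the one-dimensional Gaussian `γ₁`. The Prékopa–Leindler inequality for
Gaussian measures and the symmetry of `F` make `g` a nonincreasing function of `|t|`, so that
`(t² - 1) (g t - g 1) ≤ 0`. Since `∫ (t² - 1) dγ₁ = 0`, the integral is at most `0`, with equality
only if `g` is almost everywhere constant. As `F` contains no line parallel to `α`, `g` tends to
`0` at infinity, and a constant `g` would force `γ F = 0`.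
-/

open Filter Set ProbabilityTheory
open scoped ENNReal NNReal Topology

section OneDimensional

open scoped Pointwise

lemma volume_add_volume_le_volume_add_of_isCompact {K L : Set ℝ} (hK : IsCompact K)
    (hL : IsCompact L) (hK₀ : K.Nonempty) (hL₀ : L.Nonempty) :
    volume K + volume L ≤ volume (K + L) := by
  obtain ⟨k, hkK, hk⟩ := hK.exists_isGreatest hK₀
  obtain ⟨l, hlL, hl⟩ := hL.exists_isLeast hL₀
  have hdisj : AEDisjoint volume (l +ᵥ K) (k +ᵥ L) := by
    refine measure_mono_null (t := {k + l}) ?_ (by simp)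
    rintro _ ⟨⟨x, hx, rfl⟩, ⟨y, hy, hxy⟩⟩
    have hxk : x ≤ k := hk hx
    have hly : l ≤ y := hl hy
    simp only [vadd_eq_add, mem_singleton_iff] at hxy ⊢
    linarith
  calc volume K + volume L = volume (l +ᵥ K) + volume (k +ᵥ L) := by simp [measure_vadd]
    _ = volume ((l +ᵥ K) ∪ (k +ᵥ L)) :=
        (measure_union₀ (hL.vadd k).measurableSet.nullMeasurableSet hdisj).symm
    _ ≤ volume (K + L) := by
        refine measure_mono (union_subset ?_ ?_)
        · rintro _ ⟨x, hx, rfl⟩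
          exact ⟨x, hx, l, hlL, add_comm x l⟩
        · exact vadd_set_subset_add hkK

lemma volume_add_volume_le_volume_add {A B : Set ℝ} (hA : MeasurableSet A) (hB : MeasurableSet B)
    (hA₀ : A.Nonempty) (hB₀ : B.Nonempty) : volume A + volume B ≤ volume (A + B) := by
  obtain ⟨x, hx⟩ := hA₀
  obtain ⟨y, hy⟩ := hB₀
  rw [hA.measure_eq_iSup_isCompact, hB.measure_eq_iSup_isCompact]
  simp only [iSup_and']
  refine ENNReal.biSup_add_biSup_le' ⟨∅, by simp⟩ ⟨∅, by simp⟩ ?_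
  rintro K ⟨hKA, hK⟩ L ⟨hLB, hL⟩
  calc volume K + volume L ≤ volume (insert x K) + volume (insert y L) := by
        gcongr <;> exact subset_insert _ _
    _ ≤ volume (insert x K + insert y L) :=
        volume_add_volume_le_volume_add_of_isCompact (hK.insert x) (hL.insert y)
          (insert_nonempty _ _) (insert_nonempty _ _)
    _ ≤ volume (A + B) :=
        measure_mono (add_subset_add (insert_subset hx hKA) (insert_subset hy hLB))

lemma ennreal_geom_mean_le_arith_mean2_weighted {a b : ℝ} (ha : 0 < a) (hb : 0 < b)
    (hab : a + b = 1) (p q : ℝ≥0∞) :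
    p ^ a * q ^ b ≤ ENNReal.ofReal a * p + ENNReal.ofReal b * q := by
  induction p with
  | top => simp [ENNReal.mul_top, ha]
  | coe p =>
    induction q with
    | top => simp [ENNReal.mul_top, hb]
    | coe q =>
      lift a to ℝ≥0 using ha.le
      lift b to ℝ≥0 using hb.le
      rw [ENNReal.ofReal_coe_nnreal, ENNReal.ofReal_coe_nnreal,
        ← ENNReal.coe_rpow_of_nonneg _ ha.le, ← ENNReal.coe_rpow_of_nonneg _ hb.le]
      exact_mod_cast NNReal.geom_mean_le_arith_mean2_weighted a b p q (by exact_mod_cast hab)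

lemma lintegral_eq_lintegral_measure_ofReal_lt {α : Type*} [MeasurableSpace α] (μ : Measure α)
    [SFinite μ] {f : α → ℝ≥0∞} (hf : Measurable f) :
    ∫⁻ x, f x ∂μ = ∫⁻ t in Ioi (0 : ℝ), μ {x | ENNReal.ofReal t < f x} := by
  have hvol (c : ℝ≥0∞) : volume.restrict (Ioi 0) {t : ℝ | ENNReal.ofReal t < c} = c := by
    rw [Measure.restrict_apply (measurableSet_lt (by fun_prop) measurable_const)]
    induction c with
    | top => simp
    | coe c =>
      have : {t : ℝ | ENNReal.ofReal t < c} ∩ Ioi 0 = Ioo 0 (c : ℝ) := by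
        ext t
        simp +contextual [and_comm, ENNReal.ofReal_lt_coe_iff, le_of_lt]
      simp [this]
  have hmeas : MeasurableSet {p : α × ℝ | ENNReal.ofReal p.2 < f p.1} :=
    measurableSet_lt (by fun_prop) (by fun_prop)
  calc ∫⁻ x, f x ∂μ = μ.prod (volume.restrict (Ioi 0)) {p | ENNReal.ofReal p.2 < f p.1} := by
        rw [Measure.prod_apply hmeas]
        exact lintegral_congr fun x => (hvol (f x)).symm
    _ = ∫⁻ t in Ioi (0 : ℝ), μ {x | ENNReal.ofReal t < f x} := Measure.prod_apply_symm hmeas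

lemma lintegral_eq_mul_lintegral_measure_ofReal_mul_lt {α : Type*} [MeasurableSpace α]
    (μ : Measure α) [SFinite μ] {f : α → ℝ≥0∞} (hf : Measurable f) {c : ℝ≥0∞} (hc₀ : c ≠ 0)
    (hc : c ≠ ∞) :
    ∫⁻ x, f x ∂μ = c * ∫⁻ t in Ioi (0 : ℝ), μ {x | ENNReal.ofReal t * c < f x} := by
  calc ∫⁻ x, f x ∂μ = c * ∫⁻ x, f x / c ∂μ := by
        rw [← lintegral_const_mul _ (by fun_prop)]
        simp [ENNReal.mul_div_cancel hc₀ hc]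
    _ = c * ∫⁻ t in Ioi (0 : ℝ), μ {x | ENNReal.ofReal t * c < f x} := by
        rw [lintegral_eq_lintegral_measure_ofReal_lt μ (by fun_prop)]
        simp only [ENNReal.lt_div_iff_mul_lt (.inl hc₀) (.inl hc)]

variable {a b : ℝ} {f g h : ℝ → ℝ≥0∞}

lemma volume_superlevel_add_le (ha : 0 < a) (hb : 0 < b) (hab : a + b = 1) (hf : Measurable f)
    (hg : Measurable g) (hf₀ : ⨆ x, f x ≠ 0) (hg₀ : ⨆ x, g x ≠ 0) (hf' : ⨆ x, f x ≠ ∞)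
    (hg' : ⨆ x, g x ≠ ∞) (hfgh : ∀ x y, f x ^ a * g y ^ b ≤ h (a • x + b • y)) (c : ℝ≥0∞) :
    ENNReal.ofReal a * volume {x | c * (⨆ x, f x) < f x} +
        ENNReal.ofReal b * volume {x | c * (⨆ x, g x) < g x} ≤
      volume {x | c * ((⨆ x, f x) ^ a * (⨆ x, g x) ^ b) < h x} := by
  obtain hc | hc := le_or_gt 1 c
  · have hempty (u : ℝ → ℝ≥0∞) : {x | c * (⨆ x, u x) < u x} = ∅ :=
      eq_empty_of_forall_notMem fun x hx =>
        ((le_iSup u x).trans (le_mul_of_one_le_left' hc)).not_gt hx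
    simp [hempty]
  have hne {u : ℝ → ℝ≥0∞} (hu₀ : ⨆ x, u x ≠ 0) (hu' : ⨆ x, u x ≠ ∞) :
      {x | c * (⨆ x, u x) < u x}.Nonempty := by
    have : c * (⨆ x, u x) < ⨆ x, u x := by simpa using ENNReal.mul_lt_mul_left hu₀ hu' hc
    exact lt_iSup_iff.1 this
  have hmeas {u : ℝ → ℝ≥0∞} (hu : Measurable u) : MeasurableSet {x | c * (⨆ x, u x) < u x} :=
    measurableSet_lt measurable_const hu
  have hscale {r : ℝ} (hr : 0 < r) (s : Set ℝ) : ENNReal.ofReal r * volume s = volume (r • s) := by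
    simp [Measure.addHaar_smul, abs_of_pos hr]
  rw [hscale ha, hscale hb]
  refine (volume_add_volume_le_volume_add ((hmeas hf).const_smul₀ a) ((hmeas hg).const_smul₀ b)
    (hne hf₀ hf').smul_set (hne hg₀ hg').smul_set).trans (measure_mono ?_)
  rintro _ ⟨_, ⟨x, hx, rfl⟩, _, ⟨y, hy, rfl⟩, rfl⟩
  calc c * ((⨆ x, f x) ^ a * (⨆ x, g x) ^ b)
      = (c * ⨆ x, f x) ^ a * (c * ⨆ x, g x) ^ b := by
        rw [ENNReal.mul_rpow_of_nonneg _ _ ha.le, ENNReal.mul_rpow_of_nonneg _ _ hb.le,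
          mul_mul_mul_comm, ← ENNReal.rpow_add_of_nonneg _ _ ha.le hb.le, hab, ENNReal.rpow_one]
    _ < f x ^ a * g y ^ b :=
        ENNReal.mul_lt_mul (ENNReal.rpow_lt_rpow hx ha) (ENNReal.rpow_lt_rpow hy hb)
    _ ≤ h (a • x + b • y) := hfgh x y

lemma lintegral_rpow_mul_lintegral_rpow_le_of_iSup_ne_top (ha : 0 < a) (hb : 0 < b)
    (hab : a + b = 1) (hf : Measurable f) (hg : Measurable g) (hh : Measurable h)
    (hf' : ⨆ x, f x ≠ ∞) (hg' : ⨆ x, g x ≠ ∞)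
    (hfgh : ∀ x y, f x ^ a * g y ^ b ≤ h (a • x + b • y)) :
    (∫⁻ x, f x) ^ a * (∫⁻ x, g x) ^ b ≤ ∫⁻ x, h x := by
  obtain hf₀ | hf₀ := eq_or_ne (⨆ x, f x) 0
  · simp [ENNReal.iSup_eq_zero.1 hf₀, ha]
  obtain hg₀ | hg₀ := eq_or_ne (⨆ x, g x) 0
  · simp [ENNReal.iSup_eq_zero.1 hg₀, hb]
  set A := ⨆ x, f x
  set B := ⨆ x, g x
  have hAB₀ : A ^ a * B ^ b ≠ 0 := by simp [hf₀, hg₀, hf', hg']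
  have hAB' : A ^ a * B ^ b ≠ ∞ := ENNReal.mul_ne_top (by simp [hf', hf₀]) (by simp [hg', hg₀])
  have hmeas (u : ℝ → ℝ≥0∞) (c : ℝ≥0∞) :
      Measurable fun t : ℝ => volume {x | ENNReal.ofReal t * c < u x} :=
    Antitone.measurable fun s t hst => measure_mono fun x (hx : ENNReal.ofReal t * c < u x) =>
      lt_of_le_of_lt (by gcongr) hx
  let levels (u : ℝ → ℝ≥0∞) (c : ℝ≥0∞) : ℝ≥0∞ :=
    ∫⁻ t in Ioi (0 : ℝ), volume {x | ENNReal.ofReal t * c < u x}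
  calc (∫⁻ x, f x) ^ a * (∫⁻ x, g x) ^ b
      = A ^ a * B ^ b * (levels f A ^ a * levels g B ^ b) := by
        rw [lintegral_eq_mul_lintegral_measure_ofReal_mul_lt volume hf hf₀ hf',
          lintegral_eq_mul_lintegral_measure_ofReal_mul_lt volume hg hg₀ hg',
          ENNReal.mul_rpow_of_nonneg _ _ ha.le, ENNReal.mul_rpow_of_nonneg _ _ hb.le,
          mul_mul_mul_comm]
    _ ≤ A ^ a * B ^ b * (ENNReal.ofReal a * levels f A + ENNReal.ofReal b * levels g B) := by
        gcongr
        exact ennreal_geom_mean_le_arith_mean2_weighted ha hb hab _ _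
    _ ≤ A ^ a * B ^ b * levels h (A ^ a * B ^ b) := by
        rw [← lintegral_const_mul _ (hmeas f A), ← lintegral_const_mul _ (hmeas g B),
          ← lintegral_add_left ((hmeas f A).const_mul _)]
        gcongr
        exact lintegral_mono fun t =>
          volume_superlevel_add_le ha hb hab hf hg hf₀ hg₀ hf' hg' hfgh (ENNReal.ofReal t)
    _ = ∫⁻ x, h x := (lintegral_eq_mul_lintegral_measure_ofReal_mul_lt volume hh hAB₀ hAB').symm

lemma tendsto_lintegral_min_natCast {α : Type*} [MeasurableSpace α] (μ : Measure α)
    {u : α → ℝ≥0∞} (hu : Measurable u) :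
    Tendsto (fun n : ℕ => ∫⁻ x, min (u x) n ∂μ) atTop (𝓝 (∫⁻ x, u x ∂μ)) := by
  refine lintegral_tendsto_of_tendsto_of_monotone (fun n => by fun_prop)
    (.of_forall fun x m n hmn => by dsimp; gcongr) (.of_forall fun x => ?_)
  simpa using tendsto_const_nhds.min ENNReal.tendsto_nat_nhds_top

end OneDimensional

/-- A measure satisfies the **Prékopa–Leindler inequality** if `∫ h ≥ (∫ f) ^ a (∫ g) ^ b` whenever
`h (a x + b y) ≥ f x ^ a * g y ^ b`, for all weights `a, b > 0` with `a + b = 1`. It is the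
functional form of log-concavity of a measure, chosen here because it passes to products. -/
def PrekopaLeindler {E : Type*} [AddCommMonoid E] [Module ℝ E] [MeasurableSpace E]
    (μ : Measure E) : Prop :=
  ∀ ⦃a b : ℝ⦄, 0 < a → 0 < b → a + b = 1 → ∀ ⦃f g h : E → ℝ≥0∞⦄,
    Measurable f → Measurable g → Measurable h →
    (∀ x y, f x ^ a * g y ^ b ≤ h (a • x + b • y)) →
    (∫⁻ x, f x ∂μ) ^ a * (∫⁻ x, g x ∂μ) ^ b ≤ ∫⁻ x, h x ∂μ

theorem prekopaLeindler_volume_real : PrekopaLeindler (volume : Measure ℝ) := by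
  intro a b ha hb hab f g h hf hg hh hfgh
  obtain hf₀ | hf₀ := eq_or_ne (∫⁻ x, f x) 0
  · simp [hf₀, ha]
  obtain hg₀ | hg₀ := eq_or_ne (∫⁻ x, g x) 0
  · simp [hg₀, hb]
  have htop (u : ℝ → ℝ≥0∞) (n : ℕ) : ⨆ x, min (u x) n ≠ ∞ :=
    ((iSup_le fun x => min_le_right _ _).trans_lt (ENNReal.natCast_lt_top n)).ne
  have hlim := ENNReal.Tendsto.mul
    ((tendsto_lintegral_min_natCast volume hf).ennrpow_const a) (.inl (by simp [hf₀, ha.not_gt]))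
    ((tendsto_lintegral_min_natCast volume hg).ennrpow_const b) (.inl (by simp [hg₀, hb.not_gt]))
  refine le_of_tendsto hlim (.of_forall fun n => ?_)
  exact lintegral_rpow_mul_lintegral_rpow_le_of_iSup_ne_top ha hb hab (by fun_prop) (by fun_prop)
    hh (htop f n) (htop g n) fun x y => le_trans (by gcongr <;> exact min_le_left _ _) (hfgh x y)

namespace PrekopaLeindler

variable {E F : Type*} [AddCommMonoid E] [Module ℝ E] [MeasurableSpace E] [AddCommMonoid F]
  [Module ℝ F] [MeasurableSpace F] {μ : Measure E}

lemma dirac (x : E) : PrekopaLeindler (Measure.dirac x) := by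
  intro a b _ _ hab f g h hf hg hh hfgh
  rw [lintegral_dirac' x hf, lintegral_dirac' x hg, lintegral_dirac' x hh]
  simpa [← add_smul, hab] using hfgh x x

lemma map (hμ : PrekopaLeindler μ) (T : E →ₗ[ℝ] F) (hT : Measurable T) :
    PrekopaLeindler (μ.map T) := by
  intro a b ha hb hab f g h hf hg hh hfgh
  rw [lintegral_map hf hT, lintegral_map hg hT, lintegral_map hh hT]
  refine hμ ha hb hab (hf.comp hT) (hg.comp hT) (hh.comp hT) fun x y => ?_
  simpa using hfgh (T x) (T y)

lemma prod (hμ : PrekopaLeindler μ) {ν : Measure F} [SFinite ν] (hν : PrekopaLeindler ν) :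
    PrekopaLeindler (μ.prod ν) := by
  intro a b ha hb hab f g h hf hg hh hfgh
  rw [lintegral_prod _ hf.aemeasurable, lintegral_prod _ hg.aemeasurable,
    lintegral_prod _ hh.aemeasurable]
  refine hμ ha hb hab hf.lintegral_prod_right' hg.lintegral_prod_right' hh.lintegral_prod_right'
    fun x y => ?_
  exact hν ha hb hab (hf.comp measurable_prodMk_left) (hg.comp measurable_prodMk_left)
    (hh.comp measurable_prodMk_left) fun z w => hfgh (x, z) (y, w)

lemma withDensity (hμ : PrekopaLeindler μ) {w : E → ℝ≥0∞} (hw : Measurable w)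
    (hlog : ∀ ⦃a b : ℝ⦄, 0 < a → 0 < b → a + b = 1 → ∀ x y,
      w x ^ a * w y ^ b ≤ w (a • x + b • y)) :
    PrekopaLeindler (μ.withDensity w) := by
  intro a b ha hb hab f g h hf hg hh hfgh
  rw [lintegral_withDensity_eq_lintegral_mul _ hw hf,
    lintegral_withDensity_eq_lintegral_mul _ hw hg,
    lintegral_withDensity_eq_lintegral_mul _ hw hh]
  refine hμ ha hb hab (hw.mul hf) (hw.mul hg) (hw.mul hh) fun x y => ?_
  simp only [Pi.mul_apply]
  rw [ENNReal.mul_rpow_of_nonneg _ _ ha.le, ENNReal.mul_rpow_of_nonneg _ _ hb.le, mul_mul_mul_comm]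
  exact mul_le_mul' (hlog ha hb hab x y) (hfgh x y)

lemma measure_rpow_mul_le (hμ : PrekopaLeindler μ) {a b : ℝ} (ha : 0 < a) (hb : 0 < b)
    (hab : a + b = 1) {A B C : Set E} (hA : MeasurableSet A) (hB : MeasurableSet B)
    (hC : MeasurableSet C) (hABC : ∀ x ∈ A, ∀ y ∈ B, a • x + b • y ∈ C) :
    μ A ^ a * μ B ^ b ≤ μ C := by
  have hind : ∀ x y, A.indicator (1 : E → ℝ≥0∞) x ^ a * B.indicator (1 : E → ℝ≥0∞) y ^ b ≤
      C.indicator 1 (a • x + b • y) := fun x y => by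
    by_cases hx : x ∈ A
    · by_cases hy : y ∈ B
      · simp [hx, hy, hABC x hx y hy]
      · simp [hy, hb]
    · simp [hx, ha]
  simpa [lintegral_indicator_one, hA, hB, hC] using hμ ha hb hab (measurable_one.indicator hA)
    (measurable_one.indicator hB) (measurable_one.indicator hC) hind

end PrekopaLeindler

section Gaussian

lemma gaussianPDF_rpow_mul_le (m : ℝ) {v : ℝ≥0} {a b : ℝ} (ha : 0 < a) (hb : 0 < b)
    (hab : a + b = 1) (x y : ℝ) :
    gaussianPDF m v x ^ a * gaussianPDF m v y ^ b ≤ gaussianPDF m v (a • x + b • y) := by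
  have hconv : (a • x + b • y - m) ^ 2 ≤ a * (x - m) ^ 2 + b * (y - m) ^ 2 := by
    obtain rfl : b = 1 - a := by linarith
    simp only [smul_eq_mul]
    nlinarith [mul_nonneg (mul_nonneg ha.le hb.le) (sq_nonneg (x - y))]
  have hexp (z c : ℝ) : Real.exp (-(z - m) ^ 2 / (2 * v)) ^ c =
      Real.exp (-(c * (z - m) ^ 2) / (2 * v)) := by
    rw [← Real.exp_mul]
    ring_nf
  set C := (√(2 * Real.pi * v))⁻¹
  have hC : C = C ^ a * C ^ b := by
    rw [← Real.rpow_add_of_nonneg (by positivity) ha.le hb.le, hab, Real.rpow_one]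
  simp only [gaussianPDF, gaussianPDFReal]
  rw [ENNReal.ofReal_rpow_of_nonneg (by positivity) ha.le,
    ENNReal.ofReal_rpow_of_nonneg (by positivity) hb.le, ← ENNReal.ofReal_mul (by positivity)]
  refine ENNReal.ofReal_le_ofReal ?_
  rw [Real.mul_rpow (by positivity) (by positivity), Real.mul_rpow (by positivity) (by positivity),
    mul_mul_mul_comm, ← hC, hexp, hexp, ← Real.exp_add]
  gcongr
  rw [← add_div]
  gcongr
  linarith

theorem prekopaLeindler_gaussianReal (m : ℝ) (v : ℝ≥0) : PrekopaLeindler (gaussianReal m v) := by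
  obtain rfl | hv := eq_or_ne v 0
  · simpa using PrekopaLeindler.dirac m
  · rw [gaussianReal_of_var_ne_zero m hv]
    exact prekopaLeindler_volume_real.withDensity (by fun_prop)
      fun a b ha hb hab x y => gaussianPDF_rpow_mul_le m ha hb hab x y

variable {E : Type*} [NormedAddCommGroup E] [InnerProductSpace ℝ E]

/-- The coordinates `(t, y) ↦ t • e + y` on `E` adapted to a vector `e`, in which the hyperplanes
orthogonal to `e` are the slices `t = const`. -/
noncomputable def addOrthogonal (e : E) : ℝ × (ℝ ∙ e)ᗮ →L[ℝ] E :=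
  (ContinuousLinearMap.toSpanSingleton ℝ e).coprod (ℝ ∙ e)ᗮ.subtypeL

@[simp]
lemma addOrthogonal_apply (e : E) (p : ℝ × (ℝ ∙ e)ᗮ) : addOrthogonal e p = p.1 • e + p.2 := rfl

lemma inner_addOrthogonal {e : E} (he : ‖e‖ = 1) (p : ℝ × (ℝ ∙ e)ᗮ) :
    inner ℝ e (addOrthogonal e p) = p.1 := by
  simp [inner_add_right, real_inner_smul_right, he,
    Submodule.mem_orthogonal_singleton_iff_inner_right.1 p.2.2]

variable [FiniteDimensional ℝ E] [MeasurableSpace E] [BorelSpace E]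

lemma stdGaussian_eq_map_prod {e : E} (he : ‖e‖ = 1) :
    stdGaussian E =
      ((gaussianReal 0 1).prod (stdGaussian (ℝ ∙ e)ᗮ)).map (addOrthogonal e) := by
  refine Measure.ext_of_charFun (funext fun u => ?_)
  let q := (ℝ ∙ e)ᗮ.orthogonalProjectionOnto u
  have hinner (p : ℝ × (ℝ ∙ e)ᗮ) :
      inner ℝ (addOrthogonal e p) u = inner ℝ p.1 (inner ℝ e u) + inner ℝ p.2 q := by
    simp [q, inner_add_left, real_inner_smul_left, mul_comm]
  have hnorm : ‖u‖ ^ 2 = inner ℝ e u ^ 2 + ‖q‖ ^ 2 := by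
    rw [(ℝ ∙ e).norm_sq_eq_add_norm_sq_starProjection u,
      Submodule.starProjection_unit_singleton ℝ he]
    simp [norm_smul, he, q]
  calc charFun (stdGaussian E) u
      = charFun (gaussianReal 0 1) (inner ℝ e u) * charFun (stdGaussian (ℝ ∙ e)ᗮ) q := by
        rw [charFun_stdGaussian, charFun_stdGaussian, charFun_gaussianReal, ← Complex.exp_add,
          ← Complex.ofReal_pow, hnorm]
        push_cast
        ring_nf
    _ = charFun (((gaussianReal 0 1).prod (stdGaussian (ℝ ∙ e)ᗮ)).map (addOrthogonal e)) u := by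
        rw [charFun_apply, charFun_apply, charFun_apply, integral_map (by fun_prop) (by fun_prop),
          ← integral_prod_mul]
        simp_rw [hinner, Complex.ofReal_add, add_mul, Complex.exp_add]

theorem prekopaLeindler_stdGaussian : PrekopaLeindler (stdGaussian E) := by
  induction hn : Module.finrank ℝ E generalizing E with
  | zero =>
    have : Subsingleton E := Module.finrank_zero_iff.1 hn
    have : stdGaussian E = Measure.dirac 0 := by
      refine Measure.ext_of_charFun (funext fun u => ?_)
      simp [Subsingleton.elim u 0]
    rw [this]
    exact PrekopaLeindler.dirac 0
  | succ n ih =>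
    have : Fact (Module.finrank ℝ E = n + 1) := ⟨hn⟩
    have : Nontrivial E := Module.nontrivial_of_finrank_eq_succ hn
    obtain ⟨e, he⟩ := exists_norm_eq E zero_le_one
    rw [stdGaussian_eq_map_prod he]
    have he₀ : e ≠ 0 := by simp [← norm_ne_zero_iff, he]
    exact ((prekopaLeindler_gaussianReal 0 1).prod
      (ih (Submodule.finrank_orthogonal_span_singleton he₀))).map
        (addOrthogonal e : ℝ × (ℝ ∙ e)ᗮ →ₗ[ℝ] E) (addOrthogonal e).measurable

instance isNegInvariant_stdGaussian : (stdGaussian E).IsNegInvariant :=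
  ⟨stdGaussian_map (LinearIsometryEquiv.neg ℝ)⟩

end Gaussian

section Slices

variable {E V : Type*} [AddCommGroup E] [Module ℝ E] [MeasurableSpace E] [AddCommGroup V]
  [Module ℝ V] [MeasurableSpace V] {ν : Measure V}

/- The slice over `r • p` contains the combination with weights `(1 ± r) / 2` of the slices over
`p` and `-p`, which have the same measure. -/
lemma PrekopaLeindler.measure_slice_le_measure_slice_smul [MeasurableNeg V] [ν.IsNegInvariant]
    (hν : PrekopaLeindler ν) {K : Set (E × V)} (hK : MeasurableSet K) (hKabs : AbsConvex ℝ K)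
    (p : E) {r : ℝ} (hr : |r| < 1) :
    ν (Prod.mk p ⁻¹' K) ≤ ν (Prod.mk (r • p) ⁻¹' K) := by
  obtain ⟨hr₁, hr₂⟩ := abs_lt.1 hr
  have ha : 0 < (1 + r) / 2 := by linarith
  have hb : 0 < (1 - r) / 2 := by linarith
  have hab : (1 + r) / 2 + (1 - r) / 2 = 1 := by ring
  have hmeas (q : E) : MeasurableSet (Prod.mk q ⁻¹' K) := measurable_prodMk_left hK
  have hneg : ν (Prod.mk (-p) ⁻¹' K) = ν (Prod.mk p ⁻¹' K) := by
    have : Prod.mk (-p) ⁻¹' K = -(Prod.mk p ⁻¹' K) := by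
      ext y
      simpa using hKabs.1.neg_mem_iff (x := (p, -y))
    rw [this, Measure.measure_neg]
  calc ν (Prod.mk p ⁻¹' K)
      = ν (Prod.mk p ⁻¹' K) ^ ((1 + r) / 2) * ν (Prod.mk (-p) ⁻¹' K) ^ ((1 - r) / 2) := by
        rw [hneg, ← ENNReal.rpow_add_of_nonneg _ _ ha.le hb.le, hab, ENNReal.rpow_one]
    _ ≤ ν (Prod.mk (r • p) ⁻¹' K) :=
        hν.measure_rpow_mul_le ha hb hab (hmeas p) (hmeas (-p)) (hmeas (r • p)) fun x hx y hy => by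
          have hcomb : ((1 + r) / 2) • p + ((1 - r) / 2) • -p = r • p := by module
          simpa [-smul_neg, hcomb] using hKabs.2 hx hy ha.le hb.le hab

lemma PrekopaLeindler.measure_slice_le_of_abs_lt [MeasurableNeg V] [ν.IsNegInvariant]
    (hν : PrekopaLeindler ν) {K : Set (ℝ × V)} (hK : MeasurableSet K) (hKabs : AbsConvex ℝ K)
    {s t : ℝ} (hst : |s| < |t|) : ν (Prod.mk t ⁻¹' K) ≤ ν (Prod.mk s ⁻¹' K) := by
  have ht : t ≠ 0 := abs_pos.1 ((abs_nonneg s).trans_lt hst)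
  have hr : |s / t| < 1 := by rwa [abs_div, div_lt_one (abs_pos.2 ht)]
  simpa [ht] using hν.measure_slice_le_measure_slice_smul hK hKabs t hr

end Slices

/- The difference `(t ^ 2 - c ^ 2) * (g t - g c)` is nonpositive, and vanishes only if
`t ^ 2 = c ^ 2` or `g t = g c`. -/
lemma integral_sq_sub_sq_mul_neg {μ : Measure ℝ} [NullSingletonClass μ] {c : ℝ} {g : ℝ → ℝ}
    (hg : ∀ s t, |s| < |t| → g t ≤ g s) (hw : Integrable (fun t => t ^ 2 - c ^ 2) μ)
    (hw₀ : ∫ t, (t ^ 2 - c ^ 2) ∂μ = 0) (hwg : Integrable (fun t => (t ^ 2 - c ^ 2) * g t) μ)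
    (hconst : ¬ g =ᵐ[μ] fun _ => g c) :
    ∫ t, (t ^ 2 - c ^ 2) * g t ∂μ < 0 := by
  have hnonneg (t : ℝ) : 0 ≤ (t ^ 2 - c ^ 2) * (g c - g t) := by
    obtain h | h | h := lt_trichotomy |t| |c|
    · exact mul_nonneg_of_nonpos_of_nonpos (by linarith [sq_lt_sq.2 h]) (by linarith [hg t c h])
    · simp [(sq_eq_sq_iff_abs_eq_abs t c).2 h]
    · exact mul_nonneg (by linarith [sq_lt_sq.2 h]) (by linarith [hg c t h])
  have hint : Integrable (fun t => (t ^ 2 - c ^ 2) * (g c - g t)) μ := by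
    simp only [mul_sub]
    exact (hw.mul_const (g c)).sub hwg
  have heq : ∫ t, (t ^ 2 - c ^ 2) * (g c - g t) ∂μ = -∫ t, (t ^ 2 - c ^ 2) * g t ∂μ := by
    simp only [mul_sub]
    rw [integral_sub (hw.mul_const _) hwg, integral_mul_const, hw₀, zero_mul, zero_sub]
  rw [← neg_pos, ← heq]
  refine (integral_nonneg hnonneg).lt_of_ne fun h₀ => hconst ?_
  have hne (x : ℝ) : ∀ᵐ t ∂μ, t ≠ x := by simp [ae_iff]
  filter_upwards [(integral_eq_zero_iff_of_nonneg hnonneg hint).1 h₀.symm, hne c, hne (-c)]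
    with t ht htc htc'
  have : t ^ 2 - c ^ 2 ≠ 0 := by simp [sub_eq_zero, sq_eq_sq_iff_eq_or_eq_neg, htc, htc']
  simpa [this, sub_eq_zero, eq_comm] using ht

lemma integrable_sq_sub_one_gaussianReal (m : ℝ) (v : ℝ≥0) :
    Integrable (fun t : ℝ => t ^ 2 - 1) (gaussianReal m v) :=
  (memLp_id_gaussianReal 2).integrable_sq.sub (integrable_const 1)

lemma integral_sq_sub_one_gaussianReal : ∫ t, (t ^ 2 - 1) ∂gaussianReal 0 1 = 0 := by
  have hvar : ∫ t, t ^ 2 ∂gaussianReal 0 1 = 1 := by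
    have := variance_fun_id_gaussianReal (μ := 0) (v := 1)
    rwa [variance_of_integral_eq_zero (by fun_prop) integral_id_gaussianReal] at this
  have hsq : Integrable (fun t : ℝ => t ^ 2) (gaussianReal 0 1) :=
    (memLp_id_gaussianReal 2).integrable_sq
  simp [integral_sub hsq (integrable_const 1), hvar]

lemma eq_of_ae_eq_const_of_tendsto_atTop {μ : Measure ℝ} [μ.IsOpenPosMeasure] {X : Type*}
    [TopologicalSpace X] [T2Space X] {g : ℝ → X} {c l : X} (hc : g =ᵐ[μ] fun _ => c)
    (hl : Tendsto g atTop (𝓝 l)) : c = l := by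
  refine (tendsto_nhds_unique_of_frequently_eq hl tendsto_const_nhds
    (frequently_atTop'.2 fun a => ?_)).symm
  obtain ⟨t, ht, hat⟩ := (Measure.dense_of_ae hc).exists_gt a
  exact ⟨t, hat, ht⟩

lemma isOpenPosMeasure_gaussianReal (m : ℝ) {v : ℝ≥0} (hv : v ≠ 0) :
    (gaussianReal m v).IsOpenPosMeasure :=
  (gaussianReal_absolutelyContinuous' m hv).isOpenPosMeasure

lemma tendsto_measure_slice_atTop {V : Type*} [MeasurableSpace V] {ν : Measure V}
    [IsFiniteMeasure ν] {K : Set (ℝ × V)} (hK : MeasurableSet K)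
    (hKlim : ∀ y, ∀ᶠ t in atTop, (t, y) ∉ K) :
    Tendsto (fun t : ℝ => ν (Prod.mk t ⁻¹' K)) atTop (𝓝 0) := by
  rw [← measure_empty (μ := ν)]
  refine tendsto_measure_of_tendsto_indicator_of_isFiniteMeasure atTop ν
    (fun t => measurable_prodMk_left hK) fun y => ?_
  filter_upwards [hKlim y] with t ht
  simpa using ht

lemma setIntegral_fst_sq_sub_one_neg {V : Type*} [AddCommGroup V] [Module ℝ V] [MeasurableSpace V]
    [MeasurableNeg V] {ν : Measure V} [IsFiniteMeasure ν] [ν.IsNegInvariant]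
    (hν : PrekopaLeindler ν) {K : Set (ℝ × V)} (hK : MeasurableSet K) (hKabs : AbsConvex ℝ K)
    (hK₀ : (gaussianReal 0 1).prod ν K ≠ 0) (hKlim : ∀ y, ∀ᶠ t in atTop, (t, y) ∉ K) :
    ∫ p in K, (p.1 ^ 2 - 1) ∂(gaussianReal 0 1).prod ν < 0 := by
  let g (t : ℝ) : ℝ := ν.real (Prod.mk t ⁻¹' K)
  have hw := integrable_sq_sub_one_gaussianReal 0 1
  have hint : Integrable (K.indicator fun p => p.1 ^ 2 - 1) ((gaussianReal 0 1).prod ν) :=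
    (hw.comp_fst ν).indicator hK
  have hslice (t : ℝ) : ∫ y, K.indicator (fun p => p.1 ^ 2 - 1) (t, y) ∂ν = (t ^ 2 - 1) * g t :=
    calc ∫ y, K.indicator (fun p => p.1 ^ 2 - 1) (t, y) ∂ν
        = ∫ y, (Prod.mk t ⁻¹' K).indicator (fun _ => t ^ 2 - 1) y ∂ν := rfl
      _ = (t ^ 2 - 1) * g t := by
        rw [integral_indicator_const _ (measurable_prodMk_left hK), smul_eq_mul, mul_comm]
  have hfubini : ∫ p in K, (p.1 ^ 2 - 1) ∂(gaussianReal 0 1).prod ν =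
      ∫ t, (t ^ 2 - 1) * g t ∂gaussianReal 0 1 := by
    rw [← integral_indicator hK, integral_prod _ hint]
    simp only [hslice]
  have hanti (s t : ℝ) (hst : |s| < |t|) : g t ≤ g s :=
    ENNReal.toReal_mono (measure_ne_top _ _) (hν.measure_slice_le_of_abs_lt hK hKabs hst)
  have hconst : ¬ g =ᵐ[gaussianReal 0 1] fun _ => g 1 := fun h => by
    have := isOpenPosMeasure_gaussianReal 0 one_ne_zero
    have h₁ : g 1 = 0 := eq_of_ae_eq_const_of_tendsto_atTop h
      ((ENNReal.tendsto_toReal ENNReal.zero_ne_top).comp (tendsto_measure_slice_atTop hK hKlim))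
    refine hK₀ ((Measure.measure_prod_null hK).2 (h.mono fun t ht => ?_))
    exact (measureReal_eq_zero_iff (measure_ne_top _ _)).1 (ht.trans h₁)
  have := nullSingletonClass_gaussianReal (μ := 0) (v := 1) one_ne_zero
  have hneg := integral_sq_sub_sq_mul_neg (c := 1) hanti (by simpa using hw)
    (by simpa using integral_sq_sub_one_gaussianReal)
    (by simpa [hslice] using hint.integral_prod_left) hconst
  simpa [hfubini] using hneg

section Density

variable {E : Type*} [NormedAddCommGroup E] [InnerProductSpace ℝ E] [FiniteDimensional ℝ E]
  [MeasurableSpace E] [BorelSpace E]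

lemma integrable_exp_neg_sq_norm_div_two : Integrable fun x : E => Real.exp (-‖x‖ ^ 2 / 2) := by
  have h := (GaussianFourier.integrable_cexp_neg_mul_sq_norm_add (b := 1 / 2) (by norm_num) 0
    (0 : E)).re
  convert h using 2 with x
  rw [RCLike.re_eq_complex_re, ← Complex.exp_ofReal_re]
  push_cast
  ring_nf

theorem stdGaussian_eq_tilted_volume :
    stdGaussian E = volume.tilted fun x => -‖x‖ ^ 2 / 2 := by
  have := isProbabilityMeasure_tilted (integrable_exp_neg_sq_norm_div_two (E := E))
  refine Measure.ext_of_charFun (funext fun u => ?_)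
  set Z : ℂ := ((Real.pi : ℂ) / (1 / 2)) ^ (Module.finrank ℝ E / 2 : ℂ)
  have hexp (x : E) : ((Real.exp (-‖x‖ ^ 2 / 2) : ℝ) : ℂ) = Complex.exp (-(1 / 2) * ‖x‖ ^ 2) := by
    push_cast
    ring_nf
  have hZ : ((∫ x : E, Real.exp (-‖x‖ ^ 2 / 2) : ℝ) : ℂ) = Z := by
    rw [← integral_complex_ofReal]
    simp_rw [hexp]
    exact GaussianFourier.integral_cexp_neg_mul_sq_norm (by norm_num)
  have hZ₀ : Z ≠ 0 := by simp [Z, Complex.cpow_eq_zero_iff]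
  calc charFun (stdGaussian E) u = Complex.exp (-‖u‖ ^ 2 / 2) := charFun_stdGaussian u
    _ = Z⁻¹ * ∫ x : E, Complex.exp (-(1 / 2) * ‖x‖ ^ 2 + Complex.I * inner ℝ u x) := by
        rw [GaussianFourier.integral_cexp_neg_mul_sq_norm_add (by norm_num),
          inv_mul_cancel_left₀ hZ₀, Complex.I_sq]
        ring_nf
    _ = charFun (volume.tilted fun x : E => -‖x‖ ^ 2 / 2) u := by
        rw [charFun_apply, integral_tilted, ← integral_const_mul]
        refine integral_congr_ae (.of_forall fun x => ?_)
        simp only [Complex.real_smul, Complex.ofReal_div, hZ, hexp, Complex.exp_add,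
          real_inner_comm u x]
        ring_nf

lemma stdGaussian_absolutelyContinuous_volume : stdGaussian E ≪ volume := by
  rw [stdGaussian_eq_tilted_volume]
  exact tilted_absolutelyContinuous _ _

instance isOpenPosMeasure_stdGaussian : (stdGaussian E).IsOpenPosMeasure := by
  rw [stdGaussian_eq_tilted_volume]
  exact (absolutelyContinuous_tilted integrable_exp_neg_sq_norm_div_two).isOpenPosMeasure

lemma setIntegral_mul_exp_neg_sq_norm_div_two (s : Set E) (f : E → ℝ) :
    ∫ x in s, f x * Real.exp (-‖x‖ ^ 2 / 2) =
      (∫ x : E, Real.exp (-‖x‖ ^ 2 / 2)) * ∫ x in s, f x ∂stdGaussian E := by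
  have hZ : ∫ x : E, Real.exp (-‖x‖ ^ 2 / 2) ≠ 0 :=
    (integral_exp_pos integrable_exp_neg_sq_norm_div_two).ne'
  rw [stdGaussian_eq_tilted_volume, setIntegral_tilted, ← integral_const_mul]
  congr with x
  rw [smul_eq_mul, div_mul_eq_mul_div, mul_div_cancel₀ _ hZ, mul_comm]

end Density

section SymmetricConvex

variable {E F : Type*} [AddCommGroup E] [Module ℝ E] [AddCommGroup F] [Module ℝ F]

lemma absConvex_preimage {s : Set F} (hs : AbsConvex ℝ s) (T : E →ₗ[ℝ] F) :
    AbsConvex ℝ (T ⁻¹' s) := by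
  refine ⟨fun a ha => ?_, hs.2.linear_preimage T⟩
  rintro _ ⟨x, hx, rfl⟩
  simpa using hs.1.smul_mem ha hx

lemma absConvex_of_eq_neg {s : Set E} (hs : Convex ℝ s) (hneg : s = -s) : AbsConvex ℝ s :=
  ⟨(balanced_iff_neg_mem hs).2 fun x hx => by rw [hneg]; simpa using hx, hs⟩

/- `r • v` is the limit of `(r / t) • (t • v + y)` as `t → ∞`. -/
lemma smul_mem_closure_of_frequently_smul_add_mem [TopologicalSpace E] [ContinuousAdd E]
    [ContinuousSMul ℝ E] {s : Set E} (hs : Balanced ℝ s) {v y : E}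
    (hvy : ∃ᶠ t : ℝ in atTop, t • v + y ∈ s) (r : ℝ) : r • v ∈ closure s := by
  have hlim : Tendsto (fun t : ℝ => r • v + (r / t) • y) atTop (𝓝 (r • v)) := by
    simpa using (tendsto_const_nhds (x := r • v)).add
      (((tendsto_const_nhds (x := r)).div_atTop tendsto_id).smul_const y)
  refine mem_closure_of_frequently_of_tendsto
    ((hvy.and_eventually (eventually_ge_atTop (max 1 |r|))).mono fun t ⟨ht, hrt⟩ => ?_) hlim
  have ht₀ : 0 < t := one_pos.trans_le ((le_max_left _ _).trans hrt)
  have hnorm : ‖r / t‖ ≤ 1 := by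
    rw [Real.norm_eq_abs, abs_div, abs_of_pos ht₀, div_le_one ht₀]
    exact (le_max_right _ _).trans hrt
  simpa [smul_smul, div_mul_cancel₀ r ht₀.ne'] using hs.smul_mem hnorm ht

end SymmetricConvex

section InnerProductSpace

variable {E : Type*} [NormedAddCommGroup E] [InnerProductSpace ℝ E] [FiniteDimensional ℝ E]
  [MeasurableSpace E] [BorelSpace E]

lemma setIntegral_inner_sq_sub_one_neg {e : E} (he : ‖e‖ = 1) {s : Set E} (hs : AbsConvex ℝ s)
    (hsc : IsClosed s) (hsint : (interior s).Nonempty) (hes : ∃ r : ℝ, r • e ∉ s) :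
    ∫ x in s, (inner ℝ e x ^ 2 - 1) ∂stdGaussian E < 0 := by
  have hT : Measurable (addOrthogonal e) := (addOrthogonal e).measurable
  rw [stdGaussian_eq_map_prod he, setIntegral_map hsc.measurableSet (by fun_prop) (by fun_prop)]
  simp only [inner_addOrthogonal he]
  refine setIntegral_fst_sq_sub_one_neg prekopaLeindler_stdGaussian (hT hsc.measurableSet)
    (absConvex_preimage hs (addOrthogonal e : ℝ × (ℝ ∙ e)ᗮ →ₗ[ℝ] E)) ?_ fun y => ?_
  · rw [← Measure.map_apply hT hsc.measurableSet, ← stdGaussian_eq_map_prod he]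
    exact (Measure.measure_pos_of_nonempty_interior _ hsint).ne'
  · by_contra hy
    obtain ⟨r, hr⟩ := hes
    rw [← hsc.closure_eq] at hr
    refine hr (smul_mem_closure_of_frequently_smul_add_mem hs.1 (y := (y : E)) ?_ r)
    exact (not_eventually.1 hy).mono fun t ht => not_not.1 ht

theorem setIntegral_inner_sq_sub_norm_sq_neg {v : E} {s : Set E} (hs : AbsConvex ℝ s)
    (hsint : (interior s).Nonempty) (hvs : ∃ r : ℝ, r • v ∉ closure s) :
    ∫ x in s, (inner ℝ v x ^ 2 - ‖v‖ ^ 2) ∂stdGaussian E < 0 := by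
  have hv : v ≠ 0 := by
    rintro rfl
    obtain ⟨r, hr⟩ := hvs
    rw [smul_zero] at hr
    exact hr (hs.closure.1.zero_mem (hsint.mono interior_subset).closure)
  have hae : s =ᵐ[stdGaussian E] closure s :=
    (closure_ae_eq_of_null_frontier (stdGaussian_absolutelyContinuous_volume
      (hs.2.addHaar_frontier volume))).symm
  have hv' : ‖v‖ ≠ 0 := norm_ne_zero_iff.2 hv
  have hscale (x : E) :
      inner ℝ v x ^ 2 - ‖v‖ ^ 2 = ‖v‖ ^ 2 * (inner ℝ (‖v‖⁻¹ • v) x ^ 2 - 1) := by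
    rw [real_inner_smul_left]
    field_simp
  simp_rw [hscale]
  rw [setIntegral_congr_set hae, integral_const_mul]
  refine mul_neg_of_pos_of_neg (by positivity) (setIntegral_inner_sq_sub_one_neg
    (norm_smul_inv_norm hv) hs.closure isClosed_closure
    (hsint.mono (interior_mono subset_closure)) ?_)
  obtain ⟨r, hr⟩ := hvs
  exact ⟨r * ‖v‖, by simpa [smul_smul, mul_assoc, hv'] using hr⟩

end InnerProductSpace

section Euclidean

variable {ι : Type*} [Fintype ι] [DecidableEq ι]

lemma sum_integral_mul_sub_ite {μ : Measure (EuclideanSpace ℝ ι)} [IsFiniteMeasure μ]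
    (hμ : MemLp id 2 μ) (α : ι → ℝ) :
    ∑ i, ∑ j, (∫ x, (x i * x j - if i = j then (1 : ℝ) else 0) ∂μ) * α i * α j =
      ∫ x, (inner ℝ (WithLp.toLp 2 α) x ^ 2 - ‖WithLp.toLp 2 α‖ ^ 2) ∂μ := by
  have hcoord (i : ι) : MemLp (fun x : EuclideanSpace ℝ ι => x i) 2 μ :=
    (EuclideanSpace.proj i : EuclideanSpace ℝ ι →L[ℝ] ℝ).comp_memLp' hμ
  have hint (i j : ι) : Integrable (fun x : EuclideanSpace ℝ ι =>
      (x i * x j - if i = j then (1 : ℝ) else 0) * (α i * α j)) μ :=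
    (((hcoord i).integrable_mul (hcoord j)).sub (integrable_const _)).mul_const _
  have hform (x : EuclideanSpace ℝ ι) :
      inner ℝ (WithLp.toLp 2 α) x ^ 2 - ‖WithLp.toLp 2 α‖ ^ 2 =
        ∑ i, ∑ j, (x i * x j - if i = j then (1 : ℝ) else 0) * (α i * α j) := by
    rw [EuclideanSpace.real_norm_sq_eq, PiLp.inner_apply, sq, Finset.sum_mul_sum]
    simp only [sub_mul, Finset.sum_sub_distrib]
    congr 1
    · exact Finset.sum_congr rfl fun i _ => Finset.sum_congr rfl fun j _ => by simp; ring
    · simp [sq]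
  simp_rw [hform, mul_assoc _ (α _) (α _), ← integral_mul_const]
  rw [integral_finsetSum _ fun i _ => integrable_finsetSum _ fun j _ => hint i j]
  exact Finset.sum_congr rfl fun i _ => (integral_finsetSum _ fun j _ => hint i j).symm

theorem matrix_L_negdef_general {F : Set (EuclideanSpace ℝ ι)} (hFconv : Convex ℝ F)
    (hFsymm : F = -F) (hFint : (interior F).Nonempty) {α : ι → ℝ}
    (hα : ∃ t : ℝ, t • WithLp.toLp 2 α ∉ closure F) :
    ∑ i, ∑ j,
      (∫ x in F, (x i * x j - if i = j then (1 : ℝ) else 0) * Real.exp (-‖x‖ ^ 2 / 2)) *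
        α i * α j < 0 := by
  simp_rw [setIntegral_mul_exp_neg_sq_norm_div_two, mul_assoc (∫ x, Real.exp (-‖x‖ ^ 2 / 2)),
    ← Finset.mul_sum]
  rw [sum_integral_mul_sub_ite (IsGaussian.memLp_two_id.restrict F)]
  exact mul_neg_of_pos_of_neg (integral_exp_pos integrable_exp_neg_sq_norm_div_two)
    (setIntegral_inner_sq_sub_norm_sq_neg (absConvex_of_eq_neg hFconv hFsymm) hFint hα)

end Euclidean

lemma exists_smul_notMem_of_isBounded {E : Type*} [NormedAddCommGroup E] [NormedSpace ℝ E]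
    {s : Set E} (hs : Bornology.IsBounded s) {v : E} (hv : v ≠ 0) : ∃ t : ℝ, t • v ∉ s := by
  obtain ⟨C, hC⟩ := hs.exists_norm_le
  obtain ⟨t, ht⟩ := NormedSpace.exists_lt_norm ℝ ℝ (C / ‖v‖)
  refine ⟨t, fun h => (hC _ h).not_gt ?_⟩
  rwa [norm_smul, ← div_lt_iff₀ (norm_pos_iff.2 hv)]

/-- The matrix `L_{i,m} = ∫_F (x_i x_m - δ_{i,m}) exp(-‖x‖²/2) dx` associated with a
symmetric convex set `F` with compact closure and nonempty interior is negative
definite. -/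
theorem matrix_L_negdef (k : ℕ)
    (F : Set (EuclideanSpace ℝ (Fin k)))
    (hFconv : Convex ℝ F) (hFsymm : F = -F)
    (hFcomp : IsCompact (closure F)) (hFint : (interior F).Nonempty)
    (α : Fin k → ℝ) (hα : α ≠ 0) :
    ∑ i, ∑ j,
      (∫ x in F, (x i * x j - if i = j then (1:ℝ) else 0) * Real.exp (-‖x‖ ^ 2 / 2)) *
        α i * α j < 0 :=
  matrix_L_negdef_general hFconv hFsymm hFint
    (exists_smul_notMem_of_isBounded hFcomp.isBounded (by simpa using hα))
end
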